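/- arXiv:2412.17721 — 4 statements merged into one kernel-verified Lean document; each statement's English description precedes it below -/
import Mathlib

section
/- Let R = ℂ[u₃,u₁,u₋₁,u₋₃] with the subspace U₆ defined in the context, and let D₁, D₂, D₃ be the second-order constant-coefficient differential operators on R given by D₁ = 3∂_{u₋₃}∂_{u₁} − ∂_{u₋₁}², D₂ = 9∂_{u₃}∂_{u₋₃} − ∂_{u₁}∂_{u₋₁}, D₃ = 3∂_{u₋₁}∂_{u₃} − ∂_{u₁}². Then a homogeneous polynomial p ∈ R of degree 2 satisfies D₁(p) = D₂(p) = D₃(p) = 0 if and only if p ∈ U₆. (This expresses that U₆ is the apolar space q^⊥ of the SL₂-invariant net of quadrics q = ⟨3u₋₃*u₁* − u₋₁*², 9u₃*u₋₃* − u₁*u₋₁*, 3u₋₁*u₃* − u₁*²⟩ under the polar pairing Sym²W₃* ⊗ Sym²W₃ → ℂ.) -/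
open MvPolynomial

noncomputable section

/-- `R4 = ℂ[u₃, u₁, u₋₁, u₋₃]`, with `u₃ = X 0`, `u₁ = X 1`, `u₋₁ = X 2`, `u₋₃ = X 3`. -/
abbrev R4 : Type := MvPolynomial (Fin 4) ℂ

def w6 : R4 := X 0 ^ 2
def w4 : R4 := X 0 * X 1
def w2 : R4 := 3 * X 1 ^ 2 + 2 * X 0 * X 2
def w0 : R4 := 9 * X 1 * X 2 + X 0 * X 3
def wm2 : R4 := 3 * X 2 ^ 2 + 2 * X 1 * X 3
def wm4 : R4 := X 2 * X 3
def wm6 : R4 := X 3 ^ 2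

/-- `U₆` is the ℂ-linear span of the seven quadrics `w₆, …, w₋₆`. -/
def U6 : Submodule ℂ R4 :=
  Submodule.span ℂ {w6, w4, w2, w0, wm2, wm4, wm6}

/-- `D₁ = 3∂_{u₋₃}∂_{u₁} − ∂_{u₋₁}²` applied to `p`. -/
def D1 (p : R4) : R4 := 3 * pderiv 3 (pderiv 1 p) - pderiv 2 (pderiv 2 p)
/-- `D₂ = 9∂_{u₃}∂_{u₋₃} − ∂_{u₁}∂_{u₋₁}` applied to `p`. -/
def D2 (p : R4) : R4 := 9 * pderiv 0 (pderiv 3 p) - pderiv 1 (pderiv 2 p)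
/-- `D₃ = 3∂_{u₋₁}∂_{u₃} − ∂_{u₁}²` applied to `p`. -/
def D3 (p : R4) : R4 := 3 * pderiv 2 (pderiv 0 p) - pderiv 1 (pderiv 1 p)

section SecondDerivatives

variable {R σ : Type*} [CommSemiring R] {p q : MvPolynomial σ R} {n : ℕ}

theorem pderiv_pderiv_comm (i j : σ) (p : MvPolynomial σ R) :
    pderiv i (pderiv j p) = pderiv j (pderiv i p) := by
  classical
  obtain rfl | hij := eq_or_ne i j
  · rfl
  ext m
  simp only [coeff_pderiv, Finsupp.add_apply, Finsupp.single_eq_of_ne hij,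
    Finsupp.single_eq_of_ne hij.symm, add_zero, add_right_comm m, mul_right_comm]

theorem sum_X_mul_X_mul_pderiv_pderiv [Fintype σ] (hp : p.IsHomogeneous n) :
    ∑ j, ∑ i, X j * X i * pderiv i (pderiv j p) = (n * (n - 1)) • p := by
  calc ∑ j, ∑ i, X j * X i * pderiv i (pderiv j p)
    _ = ∑ j, X j * ∑ i, X i * pderiv i (pderiv j p) := by simp only [mul_assoc, Finset.mul_sum]
    _ = ∑ j, X j * (n - 1) • pderiv j p := by simp only [hp.pderiv.sum_X_mul_pderiv]
    _ = (n - 1) • ∑ j, X j * pderiv j p := by simp only [mul_smul_comm, Finset.smul_sum]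
    _ = (n * (n - 1)) • p := by rw [hp.sum_X_mul_pderiv, smul_smul, mul_comm]

theorem pderiv_pderiv_mul_mem {N : Submodule R (MvPolynomial σ R)} (hp : p.IsHomogeneous 2)
    (hq : q ∈ N) (i j : σ) : pderiv i (pderiv j p) * q ∈ N := by
  have h_const : pderiv i (pderiv j p) = C (coeff 0 (pderiv i (pderiv j p))) :=
    totalDegree_eq_zero_iff_eq_C.1 ((totalDegree_zero_iff_isHomogeneous σ).2 hp.pderiv.pderiv)
  rw [h_const, ← smul_eq_C_mul]
  exact N.smul_mem _ hq

/-- The linear operator `∂ᵢ∂ⱼ`. The linear combinations of these are the operators attached to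
quadrics in the dual variables. -/
def pderiv₂ (i j : σ) : MvPolynomial σ R →ₗ[R] MvPolynomial σ R :=
  (pderiv i).toLinearMap ∘ₗ (pderiv j).toLinearMap

end SecondDerivatives

/-- The apolar space `q^⊥` of the net of quadrics, taken in all degrees at once: its degree-two part
is the orthogonal of the net under the polar pairing. -/
def apolarSpace : Submodule ℂ R4 :=
  LinearMap.ker (3 • pderiv₂ 3 1 - pderiv₂ 2 2) ⊓
    LinearMap.ker (9 • pderiv₂ 0 3 - pderiv₂ 1 2) ⊓
      LinearMap.ker (3 • pderiv₂ 2 0 - pderiv₂ 1 1)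

theorem mem_apolarSpace {p : R4} : p ∈ apolarSpace ↔ D1 p = 0 ∧ D2 p = 0 ∧ D3 p = 0 := by
  simp [apolarSpace, pderiv₂, D1, D2, D3, and_assoc]

theorem U6_le_apolarSpace : U6 ≤ apolarSpace := by
  refine Submodule.span_le.2 fun w hw => mem_apolarSpace.2 ?_
  have pderiv_ofNat (i : Fin 4) (n : ℕ) [n.AtLeastTwo] :
      pderiv i (OfNat.ofNat n : R4) = 0 := pderiv_C
  rcases hw with rfl | rfl | rfl | rfl | rfl | rfl | rfl <;>
    simp [D1, D2, D3, w6, w4, w2, w0, wm2, wm4, wm6, pderiv_ofNat]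

theorem nsmul_eq_of_mem_apolarSpace {p : R4} {n : ℕ} (hp : p.IsHomogeneous n)
    (h : p ∈ apolarSpace) :
    (n * (n - 1)) • p =
      pderiv 0 (pderiv 0 p) * w6 + 2 • (pderiv 0 (pderiv 1 p) * w4) +
        pderiv 0 (pderiv 2 p) * w2 + 2 • (pderiv 0 (pderiv 3 p) * w0) +
        pderiv 1 (pderiv 3 p) * wm2 + 2 • (pderiv 2 (pderiv 3 p) * wm4) +
        pderiv 3 (pderiv 3 p) * wm6 := by
  obtain ⟨h₁, h₂, h₃⟩ := mem_apolarSpace.1 h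
  rw [D1, pderiv_pderiv_comm 3 1] at h₁
  rw [D2] at h₂
  rw [D3, pderiv_pderiv_comm 2 0] at h₃
  rw [← sum_X_mul_X_mul_pderiv_pderiv hp]
  simp only [Fin.sum_univ_four, w6, w4, w2, w0, wm2, wm4, wm6]
  rw [pderiv_pderiv_comm 1 0, pderiv_pderiv_comm 2 0, pderiv_pderiv_comm 3 0,
    pderiv_pderiv_comm 2 1, pderiv_pderiv_comm 3 1, pderiv_pderiv_comm 3 2]
  -- With `∂ᵢ = pderiv i`, apolarity says `∂₂²p = 3∂₁∂₃p`, `∂₁∂₂p = 9∂₀∂₃p` and `∂₁²p = 3∂₀∂₂p`.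
  -- This eliminates three of the ten second derivatives from Euler's identity, and the coefficient
  -- of each remaining one becomes a multiple of some `w`.
  linear_combination -X 2 ^ 2 * h₁ - 2 * X 1 * X 2 * h₂ - X 1 ^ 2 * h₃

theorem mem_U6_of_mem_apolarSpace {p : R4} (hp : p.IsHomogeneous 2) (h : p ∈ apolarSpace) :
    p ∈ U6 := by
  have term_mem {w : R4} (hw : w ∈ ({w6, w4, w2, w0, wm2, wm4, wm6} : Set R4)) (i j : Fin 4) :
      pderiv i (pderiv j p) * w ∈ U6 :=
    pderiv_pderiv_mul_mem hp (Submodule.subset_span hw) i j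
  have two_smul_mem : 2 • p ∈ U6 := by
    rw [show 2 • p = _ from nsmul_eq_of_mem_apolarSpace hp h]
    refine add_mem (add_mem (add_mem (add_mem (add_mem (add_mem ?_ (nsmul_mem ?_ 2)) ?_)
      (nsmul_mem ?_ 2)) ?_) (nsmul_mem ?_ 2)) ?_ <;>
      exact term_mem (by simp) _ _
  rw [← Nat.cast_smul_eq_nsmul ℂ] at two_smul_mem
  exact (U6.smul_mem_iff (Nat.cast_ne_zero.2 two_ne_zero)).1 two_smul_mem

/-- A homogeneous quadric is apolar to the net of quadrics iff it lies in `U₆`. -/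
theorem stmt4 (p : R4) (hp : p ∈ homogeneousSubmodule (Fin 4) ℂ 2) :
    (D1 p = 0 ∧ D2 p = 0 ∧ D3 p = 0) ↔ p ∈ U6 := by
  rw [← mem_apolarSpace]
  exact ⟨mem_U6_of_mem_apolarSpace hp, fun h => U6_le_apolarSpace h⟩
end
end

section
/- With A_e, A_f ∈ M₇(ℂ), the operators ρ_e(B) = −(A_eᵀB + BA_e), ρ_f(B) = −(A_fᵀB + BA_f) on skew-symmetric 7×7 complex matrices, and the skew-symmetric matrices N₁, N₂, N₃ as in the context: for every ℂ-subspace S of the space of skew-symmetric 7×7 complex matrices such that dim_ℂ S = 3, ρ_e(S) ⊆ S and ρ_f(S) ⊆ S, one has S equal to the ℂ-linear span of {N₁, N₂, N₃}. (The span of N₁, N₂, N₃ is the unique 3-dimensional sl₂-subrepresentation of ∧²U₆*.) -/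
open Matrix

noncomputable section

/-- Matrix of the sl₂-operator `e` on `U₆` in the ordered basis `(w₆,…,w₋₆)`. -/
def Ae : Matrix (Fin 7) (Fin 7) ℂ :=
  !![0,1,0,0,0,0,0;
     0,0,10,0,0,0,0;
     0,0,0,6,0,0,0;
     0,0,0,0,2,0,0;
     0,0,0,0,0,1,0;
     0,0,0,0,0,0,6;
     0,0,0,0,0,0,0]

/-- Matrix of the sl₂-operator `f` on `U₆` in the ordered basis `(w₆,…,w₋₆)`. -/
def Af : Matrix (Fin 7) (Fin 7) ℂ :=
  !![0,0,0,0,0,0,0;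
     6,0,0,0,0,0,0;
     0,1,0,0,0,0,0;
     0,0,2,0,0,0,0;
     0,0,0,6,0,0,0;
     0,0,0,0,10,0,0;
     0,0,0,0,0,1,0]

/-- The induced sl₂-action of `e` on alternating forms. -/
def rhoE (B : Matrix (Fin 7) (Fin 7) ℂ) : Matrix (Fin 7) (Fin 7) ℂ :=
  -(Aeᵀ * B + B * Ae)

/-- The induced sl₂-action of `f` on alternating forms. -/
def rhoF (B : Matrix (Fin 7) (Fin 7) ℂ) : Matrix (Fin 7) (Fin 7) ℂ :=
  -(Afᵀ * B + B * Af)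

/-- `N₁ = (3/5)w₋₆*∧w₄* − w₋₄*∧w₂* + 6w₋₂*∧w₀*`. -/
def N1 : Matrix (Fin 7) (Fin 7) ℂ :=
  !![0,0,0,0,0,0,0;
     0,0,0,0,0,0,-3/5;
     0,0,0,0,0,1,0;
     0,0,0,0,-6,0,0;
     0,0,0,6,0,0,0;
     0,0,-1,0,0,0,0;
     0,3/5,0,0,0,0,0]

/-- `N₂ = −(1/5)w₋₄*∧w₄* + (9/5)w₋₆*∧w₆* + w₋₂*∧w₂*`. -/
def N2 : Matrix (Fin 7) (Fin 7) ℂ :=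
  !![0,0,0,0,0,0,-9/5;
     0,0,0,0,0,1/5,0;
     0,0,0,0,-1,0,0;
     0,0,0,0,0,0,0;
     0,0,1,0,0,0,0;
     0,-1/5,0,0,0,0,0;
     9/5,0,0,0,0,0,0]

/-- `N₃ = −w₋₂*∧w₄* + (3/5)w₋₄*∧w₆* + 6w₀*∧w₂*`. -/
def N3 : Matrix (Fin 7) (Fin 7) ℂ :=
  !![0,0,0,0,0,-3/5,0;
     0,0,0,0,1,0,0;
     0,0,0,-6,0,0,0;
     0,0,6,0,0,0,0;
     0,-1,0,0,0,0,0;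
     3/5,0,0,0,0,0,0;
     0,0,0,0,0,0,0]

/-!
On a 3-dimensional invariant subspace the nilpotent operators `e` and `f` satisfy `e³ = f³ = 0`. As
`∧²U₆*` is a sum of irreducibles of highest weights `2`, `6` and `10`, a form killed by `e³` has no
part of weight `≤ 0` in the last two summands, and one killed by `f³` has no part of weight `≥ 0`
there. Hence the subspace is contained in, and by dimension equal to, the summand of highest
weight `2`. In matrix terms, the `(i, j)` entry is the coefficient of a form of weight
`2 (i + j) - 12`, so `e³ B = 0` determines the entries with `i + j ≤ 6` up to two parameters;
reversing the basis swaps `e` and `f` and yields the entries with `i + j ≥ 6`.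
-/

theorem pow_finrank_apply_eq_zero_of_isNilpotent {K V : Type*} [Field K] [AddCommGroup V]
    [Module K V] {T : Module.End K V} (hT : IsNilpotent T) {S : Submodule K V}
    [FiniteDimensional K S] (hS : ∀ v ∈ S, T v ∈ S) {v : V} (hv : v ∈ S) :
    (T ^ Module.finrank K S) v = 0 := by
  have hpow : T.restrict hS ^ Module.finrank K S = 0 := by
    simpa [(Module.End.isNilpotent.restrict hS hT).charpoly_eq_X_pow_finrank]
      using (T.restrict hS).aeval_self_charpoly
  rw [Module.End.pow_restrict] at hpow
  exact congrArg Subtype.val (LinearMap.congr_fun hpow ⟨v, hv⟩)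

section FormAction

variable {R n : Type*} [CommRing R] [Fintype n]

theorem isNilpotent_of_isUpperTriangular [LinearOrder n] {A : Matrix n n R}
    (hA : A.IsUpperTriangular) (hdiag : ∀ i, A i i = 0) : IsNilpotent A := by
  have hchar : A.charpoly = Polynomial.X ^ Fintype.card n := by
    simp [charpoly_of_isUpperTriangular A hA, hdiag]
  exact ⟨Fintype.card n, by simpa [hchar] using A.aeval_self_charpoly⟩

variable [DecidableEq n]

/-- The contragredient action of `A` on bilinear forms, encoded by their Gram matrices: the form
`(u, v) ↦ uᵀ B v` is sent to `(u, v) ↦ -((A u)ᵀ B v + uᵀ B (A v))`. Both `rhoE` and `rhoF` are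
instances of it. -/
def formAction (A : Matrix n n R) : Module.End R (Matrix n n R) :=
  -(LinearMap.mulLeft R Aᵀ + LinearMap.mulRight R A)

theorem formAction_apply (A B : Matrix n n R) : formAction A B = -(Aᵀ * B + B * A) := rfl

theorem isNilpotent_formAction {A : Matrix n n R} (hA : IsNilpotent A) :
    IsNilpotent (formAction A) := by
  have hAt : IsNilpotent Aᵀ := by
    obtain ⟨k, hk⟩ := hA
    exact ⟨k, by rw [← transpose_pow, hk, transpose_zero]⟩
  exact ((LinearMap.commute_mulLeft_right (R := R) Aᵀ A).isNilpotent_add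
    ((LinearMap.isNilpotent_mulLeft_iff R _).2 hAt)
    ((LinearMap.isNilpotent_mulRight_iff R _).2 hA)).neg

theorem reindexAlgEquiv_formAction {m : Type*} [Fintype m] [DecidableEq m] (σ : n ≃ m)
    (A B : Matrix n n R) :
    reindexAlgEquiv R R σ (formAction A B) =
      formAction (reindexAlgEquiv R R σ A) (reindexAlgEquiv R R σ B) := by
  simp only [formAction_apply, map_neg, map_add, map_mul, coe_reindexAlgEquiv, transpose_reindex]

end FormAction

section WeightReversal

/-- Conjugation by the reversal `wₖ ↦ w₋ₖ` of the weight basis of `U₆`. It interchanges the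
operators `e` and `f`, and the weights `k` and `-k` of `∧²U₆*`. -/
def weightReversal : Matrix (Fin 7) (Fin 7) ℂ ≃ₐ[ℂ] Matrix (Fin 7) (Fin 7) ℂ :=
  reindexAlgEquiv ℂ ℂ Fin.revPerm

theorem weightReversal_apply (B : Matrix (Fin 7) (Fin 7) ℂ) (i j : Fin 7) :
    weightReversal B i j = B i.rev j.rev := rfl

theorem weightReversal_Af : weightReversal Af = Ae := by
  ext i j
  fin_cases i <;> fin_cases j <;> rfl

theorem weightReversal_N2 : weightReversal N2 = -N2 := by
  ext i j
  fin_cases i <;> fin_cases j <;> norm_num [weightReversal_apply, N2, Fin.rev]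

theorem weightReversal_N3 : weightReversal N3 = -N1 := by
  ext i j
  fin_cases i <;> fin_cases j <;> norm_num [weightReversal_apply, N1, N3, Fin.rev]

theorem weightReversal_rhoF (B : Matrix (Fin 7) (Fin 7) ℂ) :
    weightReversal (rhoF B) = rhoE (weightReversal B) :=
  (reindexAlgEquiv_formAction Fin.revPerm Af B).trans
    (congrArg (formAction · (weightReversal B)) weightReversal_Af)

end WeightReversal

section InvariantSubspace

variable {S : Submodule ℂ (Matrix (Fin 7) (Fin 7) ℂ)} {B : Matrix (Fin 7) (Fin 7) ℂ}

theorem isNilpotent_Ae : IsNilpotent Ae := by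
  refine isNilpotent_of_isUpperTriangular (fun i j hij ↦ ?_) fun i ↦ ?_
  · fin_cases i <;> fin_cases j <;> first | rfl | exact absurd hij (by decide)
  · fin_cases i <;> rfl

theorem isNilpotent_Af : IsNilpotent Af :=
  (IsNilpotent.map_iff weightReversal.injective).1 (weightReversal_Af ▸ isNilpotent_Ae)

theorem rhoE_iterate_finrank_eq_zero (he : ∀ B ∈ S, rhoE B ∈ S) (hB : B ∈ S) :
    rhoE^[Module.finrank ℂ S] B = 0 := by
  rw [← pow_finrank_apply_eq_zero_of_isNilpotent (isNilpotent_formAction isNilpotent_Ae) he hB,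
    Module.End.pow_apply]
  rfl

theorem rhoF_iterate_finrank_eq_zero (hf : ∀ B ∈ S, rhoF B ∈ S) (hB : B ∈ S) :
    rhoF^[Module.finrank ℂ S] B = 0 := by
  rw [← pow_finrank_apply_eq_zero_of_isNilpotent (isNilpotent_formAction isNilpotent_Af) hf hB,
    Module.End.pow_apply]
  rfl

end InvariantSubspace

section Entries

variable {B : Matrix (Fin 7) (Fin 7) ℂ}

-- Subtraction on `Fin 7` is cyclic; the wrap-around entry `Ae 6 0` vanishes.
theorem Ae_apply_of_ne {i j : Fin 7} (h : i ≠ j - 1) : Ae i j = 0 := by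
  fin_cases i <;> fin_cases j <;> first | rfl | exact absurd rfl h

theorem rhoE_apply (B : Matrix (Fin 7) (Fin 7) ℂ) (i j : Fin 7) :
    rhoE B i j = -(Ae (i - 1) i * B (i - 1) j + Ae (j - 1) j * B i (j - 1)) := by
  simp only [rhoE, Matrix.neg_apply, Matrix.add_apply, mul_apply, transpose_apply]
  congr 2
  · exact Fintype.sum_eq_single _ fun k hk ↦ by rw [Ae_apply_of_ne hk, zero_mul]
  · rw [mul_comm]
    exact Fintype.sum_eq_single _ fun k hk ↦ by rw [Ae_apply_of_ne hk, mul_zero]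

theorem rhoE_iterate_three_apply (B : Matrix (Fin 7) (Fin 7) ℂ) (i j : Fin 7) :
    rhoE^[3] B i j =
      -(Ae (i - 1) i * Ae (i - 2) (i - 1) * Ae (i - 3) (i - 2) * B (i - 3) j +
        3 * (Ae (i - 1) i * Ae (i - 2) (i - 1) * Ae (j - 1) j) * B (i - 2) (j - 1) +
        3 * (Ae (i - 1) i * Ae (j - 1) j * Ae (j - 2) (j - 1)) * B (i - 1) (j - 2) +
        Ae (j - 1) j * Ae (j - 2) (j - 1) * Ae (j - 3) (j - 2) * B i (j - 3)) := by
  have sub_two (k : Fin 7) : k - 1 - 1 = k - 2 := by rw [sub_sub]; rfl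
  have sub_three (k : Fin 7) : k - 2 - 1 = k - 3 := by rw [sub_sub]; rfl
  simp only [Function.iterate_succ, Function.iterate_zero, Function.comp_apply, id, rhoE_apply,
    sub_two, sub_three]
  ring

theorem apply_eq_of_rhoE_iterate_three_eq_zero (hB : Bᵀ = -B) (he : rhoE^[3] B = 0) {i j : Fin 7}
    (hij : i.val + j.val ≤ 6) : B i j = (B 1 4 • N3 - B 2 4 • N2) i j := by
  have hskew (i j : Fin 7) : B j i = -B i j := congr_fun₂ hB i j
  have hdiag (i : Fin 7) : B i i = 0 := self_eq_neg.1 (hskew i i)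
  have hcube (i j : Fin 7) : rhoE^[3] B i j = 0 := congr_fun₂ he i j
  simp only [rhoE_iterate_three_apply] at hcube
  -- The equation `eqᵢⱼ` is the vanishing of the `(i, j)` entry of `e³ B`, divided by a scalar.
  have b01 : B 0 1 = 0 := by simpa [Ae] using hcube 0 4
  have b02 : B 0 2 = 0 := by simpa [Ae] using hcube 0 5
  have b03 : B 0 3 = 0 := by simpa [Ae] using hcube 0 6
  have eq15 : B 0 3 + 2 * B 1 2 = 0 := by
    linear_combination (norm := (simp [Ae]; ring)) (-1 / 6) * hcube 1 5
  have eq16 : 3 * B 0 4 + 2 * B 1 3 = 0 := by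
    linear_combination (norm := (simp [Ae]; ring)) (-1 / 6) * hcube 1 6
  have eq25 : B 0 4 + 2 * B 1 3 = 0 := by
    linear_combination (norm := (simp [Ae]; ring)) (-1 / 30) * hcube 2 5 - (2 / 5) * hdiag 2
  have eq26 : 15 * B 0 5 + 15 * B 1 4 + B 2 3 = 0 := by
    linear_combination (norm := (simp [Ae]; ring)) (-1 / 12) * hcube 2 6
  have eq35 : 5 * B 0 5 + 15 * B 1 4 + 2 * B 2 3 = 0 := by
    linear_combination (norm := (simp [Ae]; ring)) (-1 / 12) * hcube 3 5 - hskew 2 3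
  have eq36 : 5 * B 0 6 + 90 * B 1 5 + 9 * B 2 4 = 0 := by
    linear_combination (norm := (simp [Ae]; ring)) (-1 / 12) * hcube 3 6 - hdiag 3
  have eq45 : 5 * B 1 5 + B 2 4 = 0 := by
    linear_combination (norm := (simp [Ae]; ring))
      (-1 / 24) * hcube 4 5 - (1 / 2) * hskew 2 4 - (1 / 2) * hdiag 3
  have b12 : B 1 2 = 0 := by linear_combination (eq15 - b03) / 2
  have b04 : B 0 4 = 0 := by linear_combination (eq16 - eq25) / 2
  have b13 : B 1 3 = 0 := by linear_combination (3 * eq25 - eq16) / 4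
  have b05 : B 0 5 = -3 / 5 * B 1 4 := by linear_combination (2 * eq26 - eq35) / 25
  have b23 : B 2 3 = -6 * B 1 4 := by linear_combination (3 * eq35 - eq26) / 5
  have b15 : B 1 5 = -1 / 5 * B 2 4 := by linear_combination eq45 / 5
  have b06 : B 0 6 = 9 / 5 * B 2 4 := by linear_combination eq36 / 5 - 18 / 5 * eq45
  fin_cases i <;> fin_cases j <;>
    first | exact absurd hij (by decide) | (simp [N2, N3] <;> grind)

theorem apply_eq_of_rhoF_iterate_three_eq_zero (hB : Bᵀ = -B) (hf : rhoF^[3] B = 0) {i j : Fin 7}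
    (hij : 6 ≤ i.val + j.val) : B i j = (B 2 5 • N1 - B 2 4 • N2) i j := by
  have hskew (i j : Fin 7) : B j i = -B i j := congr_fun₂ hB i j
  have hB' : (weightReversal B)ᵀ = -weightReversal B := by
    rw [← map_neg, ← hB]
    rfl
  have he : rhoE^[3] (weightReversal B) = 0 := by
    rw [← (Function.Semiconj.iterate_right weightReversal_rhoF 3).eq, hf, map_zero]
  have hrev : i.rev.val + j.rev.val ≤ 6 := by
    simp only [Fin.val_rev]
    lia
  have h := apply_eq_of_rhoE_iterate_three_eq_zero hB' he hrev
  have h14 : weightReversal B 1 4 = -B 2 5 := hskew 2 5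
  have h24 : weightReversal B 2 4 = -B 2 4 := hskew 2 4
  rw [h14, h24] at h
  calc B i j = weightReversal B i.rev j.rev := by simp [weightReversal_apply]
    _ = weightReversal (-B 2 5 • N3 - -B 2 4 • N2) i j := h
    _ = (B 2 5 • N1 - B 2 4 • N2) i j := by
      simp only [map_sub, map_smul, weightReversal_N2, weightReversal_N3, neg_smul_neg]

theorem N1_apply_eq_zero {i j : Fin 7} (hij : i.val + j.val ≤ 6) : N1 i j = 0 := by
  fin_cases i <;> fin_cases j <;> first | rfl | exact absurd hij (by decide)

theorem N3_apply_eq_zero {i j : Fin 7} (hij : 6 ≤ i.val + j.val) : N3 i j = 0 := by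
  fin_cases i <;> fin_cases j <;> first | rfl | exact absurd hij (by decide)

theorem eq_combination_of_iterate_three_eq_zero (hB : Bᵀ = -B) (he : rhoE^[3] B = 0)
    (hf : rhoF^[3] B = 0) : B = B 2 5 • N1 - B 2 4 • N2 + B 1 4 • N3 := by
  ext i j
  rcases le_total (i.val + j.val) 6 with hij | hij
  · rw [apply_eq_of_rhoE_iterate_three_eq_zero hB he hij]
    simp [N1_apply_eq_zero hij, sub_eq_neg_add]
  · rw [apply_eq_of_rhoF_iterate_three_eq_zero hB hf hij]
    simp [N3_apply_eq_zero hij]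

end Entries

theorem finrank_span_triple_le {R M : Type*} [Semiring R] [StrongRankCondition R] [AddCommMonoid M]
    [Module R M] (x y z : M) : Module.finrank R (Submodule.span R {x, y, z}) ≤ 3 := by
  classical
  have h := finrank_span_finset_le_card (R := R) {x, y, z}
  simp only [Finset.coe_insert, Finset.coe_singleton] at h
  exact h.trans Finset.card_le_three

/-- The span of `N₁, N₂, N₃` is the unique 3-dimensional sl₂-subrepresentation of `∧²U₆*`. -/
theorem stmt7 (S : Submodule ℂ (Matrix (Fin 7) (Fin 7) ℂ))
    (hskew : ∀ B ∈ S, Bᵀ = -B)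
    (hdim : Module.finrank ℂ S = 3)
    (he : ∀ B ∈ S, rhoE B ∈ S)
    (hf : ∀ B ∈ S, rhoF B ∈ S) :
    S = Submodule.span ℂ ({N1, N2, N3} : Set (Matrix (Fin 7) (Fin 7) ℂ)) := by
  refine Submodule.eq_of_le_of_finrank_le (fun B hB ↦ ?_) (hdim ▸ finrank_span_triple_le N1 N2 N3)
  have hE : rhoE^[3] B = 0 := hdim ▸ rhoE_iterate_finrank_eq_zero he hB
  have hF : rhoF^[3] B = 0 := hdim ▸ rhoF_iterate_finrank_eq_zero hf hB
  rw [eq_combination_of_iterate_three_eq_zero (hskew B hB) hE hF]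
  have hN {N} (hN : N ∈ ({N1, N2, N3} : Set _)) (c : ℂ) : c • N ∈ Submodule.span ℂ {N1, N2, N3} :=
    Submodule.smul_mem _ c (Submodule.subset_span hN)
  exact add_mem (sub_mem (hN (by simp) _) (hN (by simp) _)) (hN (by simp) _)
end
end

section
/- Let η be the 7×7 skew-symmetric matrix of linear forms over ℂ[y₂,y₀,y₋₂] defined in the context. For each i ∈ {1,…,7}, the determinant of the 6×6 matrix obtained from η by deleting the i-th row and the i-th column is the square of a homogeneous cubic polynomial in y₂, y₀, y₋₂. Moreover, the ideal of ℂ[y₂,y₀,y₋₂] generated by these seven determinants equals the ideal generated by the squares of the seven cubics y₂³, y₂²y₀, y₂y₀² + y₂²y₋₂, y₀³ + 6y₂y₀y₋₂, y₀²y₋₂ + y₂y₋₂², y₀y₋₂², y₋₂³. -/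
open MvPolynomial Matrix

noncomputable section

/-- `R3 = ℂ[y₂, y₀, y₋₂]`, with `y₂ = X 0`, `y₀ = X 1`, `y₋₂ = X 2`. -/
abbrev R3 : Type := MvPolynomial (Fin 3) ℂ

/-- The SL₂-invariant net of alternating forms `η` defining the Mukai–Umemura threefold. -/
def eta : Matrix (Fin 7) (Fin 7) R3 :=
  !![0, 0, 0, 0, 0, -(C (3/5) * X 0), -(C (9/5) * X 1);
     0, 0, 0, 0, X 0, C (1/5) * X 1, -(C (3/5) * X 2);
     0, 0, 0, -(6 * X 0), -(X 1), X 2, 0;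
     0, 0, 6 * X 0, 0, -(6 * X 2), 0, 0;
     0, -(X 0), X 1, 6 * X 2, 0, 0, 0;
     C (3/5) * X 0, -(C (1/5) * X 1), -(X 2), 0, 0, 0, 0;
     C (9/5) * X 1, C (3/5) * X 2, 0, 0, 0, 0, 0]

/-- The seven cubics (the 6×6 principal Pfaffians of `η`). -/
def pfCubic : Fin 7 → R3 :=
  ![X 0 ^ 3,
    X 0 ^ 2 * X 1,
    X 0 * X 1 ^ 2 + X 0 ^ 2 * X 2,
    X 1 ^ 3 + 6 * X 0 * X 1 * X 2,
    X 1 ^ 2 * X 2 + X 0 * X 2 ^ 2,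
    X 1 * X 2 ^ 2,
    X 2 ^ 3]

/-!
In the weight basis of `U₆`, the coefficient of `y_w` in `η` pairs only weights with sum `w`. As
`w` is `2`, `0` or `-2`, the form `η` vanishes on the span of the vectors of positive weight and on
the span of those of negative weight. Both are three-dimensional, and whichever index is deleted,
one of them survives as a Lagrangian subspace of the remaining six-dimensional space. The
determinant of a skew-symmetric matrix with a zero diagonal block of half its size is the square of
the determinant of its off-diagonal block. That block is a `3 × 3` matrix of linear forms here, and
the seven cubics thus obtained are nonzero multiples of the given ones.
-/

section BlockDeterminant

variable {m R : Type*} [Fintype m] [DecidableEq m] [CommRing R]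

theorem det_fromBlocks_zero₂₂ (A B C : Matrix m m R) :
    (fromBlocks A B C 0).det = B.det * (-C).det := by
  have h_unimodular : (fromBlocks 0 (-1) 1 1 : Matrix (m ⊕ m) (m ⊕ m) R).det = 1 := by
    simp [det_fromBlocks_one₂₂]
  have h_triangular :
      fromBlocks A B C 0 * fromBlocks 0 (-1) 1 1 = fromBlocks B (-A + B) 0 (-C) := by
    simp [fromBlocks_multiply]
  rw [← mul_one (det _), ← h_unimodular, ← det_mul, h_triangular, det_fromBlocks_zero₂₁]

theorem det_eq_sq_of_toBlocks₂₂_eq_zero {M : Matrix (m ⊕ m) (m ⊕ m) R} (hM : Mᵀ = -M)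
    (h : M.toBlocks₂₂ = 0) : M.det = M.toBlocks₁₂.det ^ 2 := by
  have h_skew : M.toBlocks₂₁ = -M.toBlocks₁₂ᵀ := by
    ext i j
    exact congr_fun₂ hM (.inl j) (.inr i)
  rw [← fromBlocks_toBlocks M, h, det_fromBlocks_zero₂₂, toBlocks_fromBlocks₁₂, h_skew, neg_neg,
    det_transpose, sq]

theorem det_eq_sq_of_toBlocks₁₁_eq_zero {M : Matrix (m ⊕ m) (m ⊕ m) R} (hM : Mᵀ = -M)
    (h : M.toBlocks₁₁ = 0) : M.det = M.toBlocks₁₂.det ^ 2 := by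
  let N := M.submatrix (Equiv.sumComm m m) (Equiv.sumComm m m)
  have hN : Nᵀ = -N := by simp only [N, transpose_submatrix, hM, submatrix_neg, Pi.neg_apply]
  have h_block : N.toBlocks₁₂ = -M.toBlocks₁₂ᵀ := by
    ext i j
    exact congr_fun₂ hM (.inl j) (.inr i)
  have h_sign : ((-1 : R) ^ Fintype.card m) ^ 2 = 1 := by rw [pow_right_comm, neg_one_sq, one_pow]
  calc M.det = N.det := (det_submatrix_equiv_self _ M).symm
    _ = N.toBlocks₁₂.det ^ 2 := det_eq_sq_of_toBlocks₂₂_eq_zero hN h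
    _ = M.toBlocks₁₂.det ^ 2 := by
      rw [h_block, det_neg, det_transpose, mul_pow, h_sign, one_mul]

end BlockDeterminant

theorem isHomogeneous_det {n σ R : Type*} [Fintype n] [DecidableEq n] [CommRing R]
    {A : Matrix n n (MvPolynomial σ R)} {d : ℕ} (hA : ∀ i j, (A i j).IsHomogeneous d) :
    A.det.IsHomogeneous (Fintype.card n * d) := by
  rw [det_apply]
  refine .sum _ _ _ fun τ _ => ?_
  have h_prod : (∏ i, A (τ i) i).IsHomogeneous (Fintype.card n * d) := by
    simpa using IsHomogeneous.prod Finset.univ (fun i => A (τ i) i) (fun _ => d) fun i _ => hA _ i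
  rcases Int.units_eq_one_or (Equiv.Perm.sign τ) with h | h
  · simpa only [h, one_smul] using h_prod
  · simpa only [h, Units.neg_smul, one_smul] using h_prod.neg

theorem span_range_eq_of_associated {ι κ R : Type*} [CommSemiring R] {f : ι → R} {g : κ → R}
    (e : ι ≃ κ) (h : ∀ i, Associated (f i) (g (e i))) :
    Ideal.span (Set.range f) = Ideal.span (Set.range g) := by
  rw [← e.surjective.range_comp g, Ideal.span_range_eq_iSup, Ideal.span_range_eq_iSup]
  exact iSup_congr fun i => le_antisymm
    (Ideal.span_singleton_le_span_singleton.mpr (h i).symm.dvd)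
    (Ideal.span_singleton_le_span_singleton.mpr (h i).dvd)

theorem eta_transpose : etaᵀ = -eta := by
  ext1 i j
  fin_cases i <;> fin_cases j <;> simp [eta]

theorem isHomogeneous_eta (i j : Fin 7) : (eta i j).IsHomogeneous 1 := by
  have h_six_mul (k : Fin 3) : (6 * X k : R3).IsHomogeneous 1 := isHomogeneous_C_mul_X 6 k
  fin_cases i <;> fin_cases j <;>
    simp [eta, isHomogeneous_zero, isHomogeneous_X, isHomogeneous_C_mul_X, h_six_mul,
      IsHomogeneous.neg]

/- The basis vector `i` has weight `6 - 2 * i`, so `y₂`, `y₀`, `y₋₂` occur at `i + j = 5, 6, 7`. -/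
theorem eta_apply_eq_zero {i j : Fin 7} (h : (i : ℕ) + j < 5 ∨ 7 < (i : ℕ) + j) :
    eta i j = 0 := by
  fin_cases i <;> fin_cases j <;> first | rfl | simp at h

/-- The upper right `3 × 3` block of `eta` with its `i`-th row and column deleted. Its determinant
is, up to sign, the Pfaffian of that `6 × 6` matrix. -/
def etaBlock (i : Fin 7) : Matrix (Fin 3) (Fin 3) R3 :=
  eta.submatrix (i.succAbove ∘ Fin.castAdd 3) (i.succAbove ∘ Fin.natAdd 3)

theorem det_eta_submatrix (i : Fin 7) :
    (eta.submatrix i.succAbove i.succAbove).det = (etaBlock i).det ^ 2 := by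
  let e : Fin 3 ⊕ Fin 3 ≃ Fin 6 := finSumFinEquiv
  let M := (eta.submatrix i.succAbove i.succAbove).submatrix e e
  have hM : Mᵀ = -M := by
    simp only [M, transpose_submatrix, eta_transpose, submatrix_neg, Pi.neg_apply]
  have h_val (k : Fin 6) : (i.succAbove k : ℕ) = if (k : ℕ) < i then (k : ℕ) else k + 1 := by
    simp only [Fin.succAbove, Fin.lt_def, Fin.val_castSucc, apply_ite Fin.val, Fin.val_succ]
  rw [← det_submatrix_equiv_self e]
  rcases le_total (i : ℕ) 3 with hi | hi
  · have h_four_le (k : Fin 3) : 4 ≤ (i.succAbove (Fin.natAdd 3 k) : ℕ) := by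
      grind [Fin.val_natAdd]
    refine det_eq_sq_of_toBlocks₂₂_eq_zero hM (ext fun k l => eta_apply_eq_zero (.inr ?_))
    exact add_le_add (h_four_le k) (h_four_le l)
  · have h_le_two (k : Fin 3) : (i.succAbove (Fin.castAdd 3 k) : ℕ) ≤ 2 := by
      grind [Fin.val_castAdd]
    refine det_eq_sq_of_toBlocks₁₁_eq_zero hM (ext fun k l => eta_apply_eq_zero (.inl ?_))
    exact Nat.lt_succ_of_le (add_le_add (h_le_two k) (h_le_two l))

/-- The scalars by which the determinants of the blocks `etaBlock i` differ from the cubics. The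
cubics occur in the reverse order, since deleting a basis vector of weight `w` leaves a Pfaffian
of weight `-w`. -/
def etaBlockScalar : Fin 7 → ℂ :=
  ![-18/5, -54/5, -54/25, -9/25, -54/25, -54/5, -18/5]

theorem det_etaBlock (i : Fin 7) :
    (etaBlock i).det = C (etaBlockScalar i) * pfCubic i.rev := by
  refine MvPolynomial.funext fun v => ?_
  rw [det_fin_three]
  fin_cases i <;> simp [etaBlock, eta, etaBlockScalar, pfCubic, Fin.succAbove, Fin.rev] <;> ring

theorem associated_det_etaBlock (i : Fin 7) : Associated (etaBlock i).det (pfCubic i.rev) := by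
  have h_ne : etaBlockScalar i ≠ 0 := by fin_cases i <;> simp [etaBlockScalar]
  rw [det_etaBlock]
  exact associated_unit_mul_left _ _ (h_ne.isUnit.map C)

theorem stmt8 :
    (∀ i : Fin 7, ∃ c : R3, c.IsHomogeneous 3 ∧
      (eta.submatrix i.succAbove i.succAbove).det = c ^ 2) ∧
    Ideal.span (Set.range fun i : Fin 7 => (eta.submatrix i.succAbove i.succAbove).det) =
      Ideal.span (Set.range fun i : Fin 7 => pfCubic i ^ 2) := by
  simp only [det_eta_submatrix]
  exact ⟨fun i => ⟨_, isHomogeneous_det fun _ _ => isHomogeneous_eta _ _, rfl⟩,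
    span_range_eq_of_associated Fin.revPerm fun i => (associated_det_etaBlock i).pow_pow⟩
end
end

section
/- Let η be the 7×7 skew-symmetric matrix of linear forms over ℂ[y₂,y₀,y₋₂] defined in the context, regarded as a matrix over the polynomial ring ℂ[a₁,…,a₁₂][y₂,y₀,y₋₂], and let P₃ be the 3×7 matrix over ℂ[a₁,…,a₁₂] with rows (1, 0, 0, a₁, a₂, a₃, a₄), (0, 1, 0, a₅, a₆, a₇, a₈), (0, 0, 1, a₉, a₁₀, a₁₁, a₁₂). Then the ideal of ℂ[a₁,…,a₁₂] generated by all coefficients (with respect to the monomials y₂, y₀, y₋₂) of the entries of the 3×3 skew-symmetric matrix P₃ η P₃ᵀ equals the ideal generated by the nine polynomials 5a₂+3a₇, a₃+9a₈, 2a₂a₅−2a₁a₆+(1/5)a₄, 10a₁−a₁₁, 5a₂−9a₁₂, 6a₂a₉−6a₁a₁₀−a₃, 6a₅+a₁₀, 5a₆+a₁₁, 2a₆a₉−2a₅a₁₀−(1/3)a₇−(1/5)a₁₂. (These nine equations define the affine chart V₁₂ of the Mukai–Umemura threefold X = Gr^ω(3,U₆) inside the standard affine chart of Gr(3,7).) 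-/
open MvPolynomial Matrix

noncomputable section

/-- `A = ℂ[a₁, …, a₁₂]`, with `aₖ = X (k-1)`. -/
abbrev A12 : Type := MvPolynomial (Fin 12) ℂ

/-- `RA = A[y₂, y₀, y₋₂]`, with `y₂ = X 0`, `y₀ = X 1`, `y₋₂ = X 2`. -/
abbrev RA : Type := MvPolynomial (Fin 3) A12

/-- The SL₂-invariant net of alternating forms `η`, regarded over `ℂ[a₁,…,a₁₂][y₂,y₀,y₋₂]`. -/
def etaA : Matrix (Fin 7) (Fin 7) RA :=
  !![0, 0, 0, 0, 0, -(C (C (3/5)) * X 0), -(C (C (9/5)) * X 1);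
     0, 0, 0, 0, X 0, C (C (1/5)) * X 1, -(C (C (3/5)) * X 2);
     0, 0, 0, -(6 * X 0), -(X 1), X 2, 0;
     0, 0, 6 * X 0, 0, -(6 * X 2), 0, 0;
     0, -(X 0), X 1, 6 * X 2, 0, 0, 0;
     C (C (3/5)) * X 0, -(C (C (1/5)) * X 1), -(X 2), 0, 0, 0, 0;
     C (C (9/5)) * X 1, C (C (3/5)) * X 2, 0, 0, 0, 0, 0]

/-- The 3×7 matrix `P₃` of the standard affine chart of `Gr(3,7)`. -/
def P3 : Matrix (Fin 3) (Fin 7) A12 :=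
  !![1, 0, 0, X 0, X 1, X 2, X 3;
     0, 1, 0, X 4, X 5, X 6, X 7;
     0, 0, 1, X 8, X 9, X 10, X 11]

/-- The nine polynomials defining the affine chart `V₁₂` of the Mukai–Umemura threefold. -/
def nineEqs : Set A12 :=
  {5 * X 1 + 3 * X 6,
   X 2 + 9 * X 7,
   2 * X 1 * X 4 - 2 * X 0 * X 5 + C (1/5) * X 3,
   10 * X 0 - X 10,
   5 * X 1 - 9 * X 11,
   6 * X 1 * X 8 - 6 * X 0 * X 9 - X 2,
   6 * X 4 + X 9,
   5 * X 5 + X 10,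
   2 * X 5 * X 8 - 2 * X 4 * X 9 - C (1/3) * X 6 - C (1/5) * X 11}

/-!
Each entry of `P₃ η P₃ᵀ` is a linear form in `y₂, y₀, y₋₂` whose coefficients are the values of
three alternating forms on a pair of rows of `P₃`, hence linear combinations of Plücker coordinates.
As the matrix is skew-symmetric, only the three entries above the diagonal matter, and each of their
nine coefficients is a nonzero constant times one of the nine equations.
-/

section ContentIdeal

variable {σ R m n : Type*} [CommSemiring R]

/-- The ideal generated by the coefficients of a polynomial in several variables, the analogue of
`Polynomial.contentIdeal`. -/
def contentIdeal (p : MvPolynomial σ R) : Ideal R :=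
  Ideal.span (Set.range fun d ↦ coeff d p)

/-- The linear form `∑ k, a k * X k` with coefficient vector `a`. -/
def linearForm [Fintype σ] (a : σ → R) : MvPolynomial σ R :=
  ∑ k, C (a k) * X k

theorem contentIdeal_zero : contentIdeal (0 : MvPolynomial σ R) = ⊥ := by
  simp [contentIdeal]

theorem coeff_single_linearForm [Fintype σ] (a : σ → R) (k : σ) :
    coeff (Finsupp.single k 1) (linearForm a) = a k := by
  classical
  simp [linearForm, coeff_sum, coeff_C_mul, coeff_X, Finsupp.single_left_inj]

theorem contentIdeal_linearForm [Fintype σ] (a : σ → R) :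
    contentIdeal (linearForm a) = Ideal.span (Set.range a) := by
  apply le_antisymm <;> refine Ideal.span_le.mpr (Set.range_subset_iff.mpr fun k ↦ ?_)
  · simp only [linearForm, coeff_sum, coeff_C_mul]
    exact sum_mem fun i _ ↦ Ideal.mul_mem_right _ _ (Ideal.subset_span ⟨i, rfl⟩)
  · exact Ideal.subset_span ⟨Finsupp.single k 1, coeff_single_linearForm a k⟩

theorem span_coeff_entries (M : Matrix m n (MvPolynomial σ R)) :
    Ideal.span {x | ∃ i j d, coeff d (M i j) = x} = ⨆ i, ⨆ j, contentIdeal (M i j) := by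
  simp only [contentIdeal, ← Ideal.span_iUnion]
  congr 1
  ext x
  simp

theorem span_singleton_C_mul {c : R} (hc : IsUnit c) (p : MvPolynomial σ R) :
    Ideal.span {C c * p} = Ideal.span {p} :=
  Ideal.span_singleton_mul_left_unit (hc.map C) p

end ContentIdeal

section CompleteLattice

variable {α : Type*} [CompleteLattice α]

theorem iSup_iSup_eq_iSup_lt_of_symm {n : Type*} [LinearOrder n] (f : n → n → α)
    (hsymm : ∀ i j, f i j = f j i) (hdiag : ∀ i, f i i = ⊥) :
    ⨆ i, ⨆ j, f i j = ⨆ i, ⨆ j, ⨆ _ : i < j, f i j := by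
  refine le_antisymm (iSup₂_le fun i j ↦ ?_) (iSup₂_mono fun i j ↦ iSup_const_le)
  rcases lt_trichotomy i j with hij | rfl | hji
  · exact le_iSup₂_of_le i j (le_iSup_of_le hij le_rfl)
  · exact (hdiag i).trans_le bot_le
  · exact (hsymm i j).trans_le (le_iSup₂_of_le j i (le_iSup_of_le hji le_rfl))

theorem iSup_lt_fin_three (f : Fin 3 → Fin 3 → α) :
    ⨆ i, ⨆ j, ⨆ _ : i < j, f i j = f 0 1 ⊔ f 0 2 ⊔ f 1 2 := by
  apply le_antisymm
  · refine iSup₂_le fun i j ↦ iSup_le fun hij ↦ ?_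
    fin_cases i <;> fin_cases j <;> simp_all [le_sup_of_le_left]
  · refine sup_le (sup_le ?_ ?_) ?_ <;>
      exact le_iSup₂_of_le _ _ (le_iSup_of_le (by decide) le_rfl)

end CompleteLattice

section SkewSymmetric

variable {σ R n : Type*} [CommRing R]

theorem contentIdeal_neg (p : MvPolynomial σ R) : contentIdeal (-p) = contentIdeal p := by
  simp only [contentIdeal, Ideal.span, coeff_neg, Submodule.span_range_eq_iSup,
    ← Set.neg_singleton, Submodule.span_neg]

theorem iSup_contentIdeal_of_transpose_eq_neg [LinearOrder n] [IsAddTorsionFree R]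
    {M : Matrix n n (MvPolynomial σ R)} (hM : Mᵀ = -M) :
    ⨆ i, ⨆ j, contentIdeal (M i j) = ⨆ i, ⨆ j, ⨆ _ : i < j, contentIdeal (M i j) := by
  have hskew (i j : n) : M j i = -M i j := congr_fun₂ hM i j
  have hdiag (i : n) : M i i = 0 := by
    ext d
    exact self_eq_neg.mp (congr_arg (coeff d) (hskew i i))
  refine iSup_iSup_eq_iSup_lt_of_symm _ (fun i j ↦ ?_) fun i ↦ ?_
  · rw [hskew j i, contentIdeal_neg]
  · rw [hdiag, contentIdeal_zero]

theorem transpose_mul_mul_transpose_of_transpose_eq_neg {m : Type*} [Fintype n]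
    {M : Matrix n n R} (hM : Mᵀ = -M) (P : Matrix m n R) :
    (P * M * Pᵀ)ᵀ = -(P * M * Pᵀ) := by
  simp only [transpose_mul, transpose_transpose, hM, Matrix.neg_mul, Matrix.mul_neg,
    Matrix.mul_assoc]

end SkewSymmetric

theorem transpose_etaA : etaAᵀ = -etaA := by
  ext1 i j
  fin_cases i <;> fin_cases j <;> simp [etaA]

/-- The `2 × 2` minor in columns `a`, `b` of the matrix with rows `u`, `v`, that is, a Plücker
coordinate of the plane spanned by `u` and `v`. -/
def pluckerCoord {n R : Type*} [CommRing R] (u v : n → R) (a b : n) : R :=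
  u a * v b - u b * v a

/-- The values on `(u, v)` of the three alternating forms spanning the net `η`, in the order
`y₂`, `y₀`, `y₋₂` of their coefficients in `η`. -/
def netForms (u v : Fin 7 → A12) : Fin 3 → A12 :=
  let p := pluckerCoord u v
  ![-(C (3/5) * p 0 5) + p 1 4 - 6 * p 2 3,
    -(C (9/5) * p 0 6) + C (1/5) * p 1 5 - p 2 4,
    -(C (3/5) * p 1 6) + p 2 5 - 6 * p 3 4]

theorem mul_etaA_mul_transpose_apply {m : Type*} (P : Matrix m (Fin 7) A12) (i j : m) :
    (P.map (C : A12 → RA) * etaA * (P.map (C : A12 → RA))ᵀ) i j =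
      linearForm (netForms (P i) (P j)) := by
  simp only [Matrix.mul_apply, map_apply, transpose_apply, Fin.sum_univ_seven, Fin.sum_univ_three,
    etaA, linearForm, netForms, pluckerCoord, of_apply, cons_val, map_add, map_sub, map_neg,
    map_mul, map_ofNat]
  ring

theorem netForms_P3_zero_one :
    netForms (P3 0) (P3 1) =
      ![C (-1/5) * (5 * X 1 + 3 * X 6),
        C (-1/5) * (X 2 + 9 * X 7),
        C 3 * (2 * X 1 * X 4 - 2 * X 0 * X 5 + C (1/5) * X 3)] := by
  refine vec3_eq ?_ ?_ ?_ <;>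
  · simp only [pluckerCoord, P3, of_apply, cons_val, ← algebraMap_eq]
    algebra

theorem netForms_P3_zero_two :
    netForms (P3 0) (P3 2) =
      ![C (3/5) * (10 * X 0 - X 10),
        C (1/5) * (5 * X 1 - 9 * X 11),
        6 * X 1 * X 8 - 6 * X 0 * X 9 - X 2] := by
  refine vec3_eq ?_ ?_ ?_ <;>
  · simp only [pluckerCoord, P3, of_apply, cons_val, ← algebraMap_eq]
    algebra

theorem netForms_P3_one_two :
    netForms (P3 1) (P3 2) =
      ![6 * X 4 + X 9,
        C (1/5) * (5 * X 5 + X 10),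
        C 3 * (2 * X 5 * X 8 - 2 * X 4 * X 9 - C (1/3) * X 6 - C (1/5) * X 11)] := by
  refine vec3_eq ?_ ?_ ?_ <;>
  · simp only [pluckerCoord, P3, of_apply, cons_val, ← algebraMap_eq]
    algebra

theorem span_range_netForms_P3 :
    Ideal.span (Set.range (netForms (P3 0) (P3 1))) ⊔
        Ideal.span (Set.range (netForms (P3 0) (P3 2))) ⊔
        Ideal.span (Set.range (netForms (P3 1) (P3 2))) = Ideal.span nineEqs := by
  have h_neg_fifth : IsUnit (-1/5 : ℂ) := .mk0 _ (by norm_num)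
  have h_fifth : IsUnit (1/5 : ℂ) := .mk0 _ (by norm_num)
  have h_three_fifths : IsUnit (3/5 : ℂ) := .mk0 _ (by norm_num)
  have h_three : IsUnit (3 : ℂ) := .mk0 _ (by norm_num)
  simp only [netForms_P3_zero_one, netForms_P3_zero_two, netForms_P3_one_two, nineEqs,
    Matrix.range_cons, Matrix.range_empty, Set.union_empty, Ideal.span_union, Ideal.span_insert,
    sup_assoc, span_singleton_C_mul h_neg_fifth, span_singleton_C_mul h_fifth,
    span_singleton_C_mul h_three_fifths, span_singleton_C_mul h_three]

theorem stmt9 :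
    Ideal.span {x : A12 | ∃ (i j : Fin 3) (d : Fin 3 →₀ ℕ),
        MvPolynomial.coeff d ((P3.map (C : A12 → RA) * etaA * (P3.map (C : A12 → RA))ᵀ) i j) = x} =
      Ideal.span nineEqs := by
  set M := P3.map (C : A12 → RA) * etaA * (P3.map (C : A12 → RA))ᵀ with hM
  have hskew : Mᵀ = -M := transpose_mul_mul_transpose_of_transpose_eq_neg transpose_etaA _
  calc
    _ = ⨆ i, ⨆ j, contentIdeal (M i j) := span_coeff_entries M
    _ = contentIdeal (M 0 1) ⊔ contentIdeal (M 0 2) ⊔ contentIdeal (M 1 2) := by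
      rw [iSup_contentIdeal_of_transpose_eq_neg hskew, iSup_lt_fin_three]
    _ = Ideal.span nineEqs := by
      simp only [hM, mul_etaA_mul_transpose_apply, contentIdeal_linearForm, span_range_netForms_P3]
end
end
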